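/- arXiv:1402.3048 — 2 statements merged into one kernel-verified Lean document; each statement's English description precedes it below -/
import Mathlib

section
/- For every uncountable cardinal κ, the partition relation κ → (κ, ω)² holds: for every coloring c of the unordered pairs of a set of cardinality κ with two colors 0 and 1, either there exists a subset of cardinality κ all of whose pairs receive color 0, or there exists a countably infinite subset all of whose pairs receive color 1. -/
/-!
View the color-`1` pairs as the edges of a graph, and suppose that every clique is finite; an
independent set of size `κ` is needed.

If every set `Y` of size `κ` had a vertex with `κ` neighbors inside `Y`, iterating would produce an
infinite clique. So there is `Y` of size `κ` in which every vertex has fewer than `κ` neighbors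
(`exists_small_degrees`).

If `κ` is regular, a maximal independent subset `H` of `Y` has size `κ`: otherwise `H` together
with its neighbors in `Y` would have size less than `κ`, leaving room to enlarge `H`
(`exists_indep_of_isRegular`).

If `κ` is singular with cofinality `λ`, let `μ i`, `i < λ`, be cofinal below `κ`. The regular case
and the pigeonhole principle give, in every subset of `Y` of size `κ`, independent sets `H` with
`μ i ≤ |H| < κ` whose vertices all have degree at most one fixed `μ j`; thus `H` has fewer
than `κ` neighbors in `Y` (`exists_indep_block`). Choosing such blocks `H i` by recursion on
`i < λ`, each one avoiding the earlier blocks and their neighbors, is possible because a union of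
fewer than `λ` sets of size less than `κ` has size less than `κ`. The union of the blocks is an
independent set of size `κ`.
-/

open Cardinal Set

namespace ErdosDushnikMiller

universe u

variable {α : Type u} {κ : Cardinal.{u}}

lemma mk_iUnion_lt {ι : Type u} {A : ι → Set α} (hκ : ℵ₀ ≤ κ) (hι : #ι < κ.ord.cof)
    (hA : ∀ i, #(A i) < κ) : #(⋃ i, A i) < κ :=
  (mk_iUnion_le A).trans_lt
    (mul_lt_of_lt hκ (hι.trans_le (Ordinal.cof_ord_le κ)) (iSup_lt_of_lt_cof_ord hι hA))

lemma mk_union_lt {A B : Set α} (hκ : ℵ₀ ≤ κ) (hA : #A < κ) (hB : #B < κ) :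
    #(A ∪ B : Set α) < κ :=
  (mk_union_le A B).trans_lt (add_lt_of_lt hκ hA hB)

lemma exists_cofinal_family (κ : Cardinal.{u}) :
    ∃ f : κ.ord.cof.ord.ToType → Cardinal.{u}, (∀ i, f i < κ) ∧ ∀ μ < κ, ∃ i, μ ≤ f i := by
  obtain ⟨s, hs, hcard⟩ := Order.exists_cof_eq κ.ord.ToType
  have e : Nonempty (κ.ord.cof.ord.ToType ≃ s) := by
    rw [← Cardinal.eq, hcard, mk_ord_toType, Ordinal.cof_toType]
  obtain ⟨e⟩ := e
  refine ⟨fun i => #(Iio (e i).1), fun i => by simpa using mk_Iio_lt (e i).1, fun μ hμ => ?_⟩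
  obtain ⟨x, hx⟩ := Ordinal.typein_surj (α := κ.ord.ToType) (· < ·) (o := μ.ord)
    (by rw [Ordinal.type_toType]; exact ord_lt_ord.2 hμ)
  obtain ⟨y, hy, hle⟩ := hs x
  refine ⟨e.symm ⟨y, hy⟩, ?_⟩
  simp only [Equiv.apply_symm_apply]
  refine le_trans ?_ (mk_le_mk_of_subset (Iio_subset_Iio hle))
  rw [← card_ord μ, ← hx, ← Ordinal.type_Iio_lt, Ordinal.card_type]

variable {G : SimpleGraph α}

lemma exists_small_degrees (hG : ∀ s, G.IsClique s → s.Finite) {X : Set α}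
    (hX : κ ≤ #X) :
    ∃ Y ⊆ X, κ ≤ #Y ∧ ∀ x ∈ Y, #(Y ∩ G.neighborSet x : Set α) < κ := by
  by_contra! h
  have step : ∀ Y : {Y : Set α // Y ⊆ X ∧ κ ≤ #Y}, ∃ x ∈ Y.1,
      κ ≤ #(Y.1 ∩ G.neighborSet x : Set α) := fun Y => h Y.1 Y.2.1 Y.2.2
  choose v hv hdeg using step
  let next : {Y : Set α // Y ⊆ X ∧ κ ≤ #Y} → {Y : Set α // Y ⊆ X ∧ κ ≤ #Y} :=
    fun Y => ⟨Y.1 ∩ G.neighborSet (v Y), inter_subset_left.trans Y.2.1, hdeg Y⟩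
  let Y : ℕ → {Y : Set α // Y ⊆ X ∧ κ ≤ #Y} := fun n => next^[n] ⟨X, Subset.rfl, hX⟩
  have hY : ∀ n, (Y (n + 1)).1 = (Y n).1 ∩ G.neighborSet (v (Y n)) := fun n => by
    simp only [Y, Function.iterate_succ_apply', next]
  have hanti : Antitone fun n => (Y n).1 :=
    antitone_nat_of_succ_le fun n => by rw [hY]; exact inter_subset_left
  have hadj : ∀ m n, m < n → G.Adj (v (Y m)) (v (Y n)) := fun m n hmn => by
    have h1 : v (Y n) ∈ (Y (m + 1)).1 := hanti (Nat.succ_le_of_lt hmn) (hv (Y n))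
    rw [hY] at h1
    exact h1.2
  have hne : ∀ m n, m ≠ n → G.Adj (v (Y m)) (v (Y n)) := fun m n hmn =>
    hmn.lt_or_gt.elim (hadj m n) fun h => (hadj n m h).symm
  have hinj : Function.Injective fun n => v (Y n) := fun m n hmn => by
    by_contra hc
    exact (hne m n hc).ne hmn
  refine infinite_range_of_injective hinj (hG _ ?_)
  rintro _ ⟨m, rfl⟩ _ ⟨n, rfl⟩ hmn
  exact hne m n fun h => hmn (by rw [h])

lemma exists_indep_of_isRegular (hκ : κ.IsRegular) (hG : ∀ s, G.IsClique s → s.Finite)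
    {X : Set α} (hX : κ ≤ #X) : ∃ H ⊆ X, κ ≤ #H ∧ G.IsIndepSet H := by
  obtain ⟨Y, hYX, hY, hdeg⟩ := exists_small_degrees hG hX
  obtain ⟨H, hH⟩ := zorn_subset {H : Set α | H ⊆ Y ∧ G.IsIndepSet H} fun c hc hchain =>
    ⟨⋃₀ c, ⟨sUnion_subset fun s hs => (hc hs).1,
      (pairwise_sUnion hchain.directedOn).2 fun s hs => (hc hs).2⟩,
      fun s hs => subset_sUnion_of_mem hs⟩
  refine ⟨H, hH.prop.1.trans hYX, ?_, hH.prop.2⟩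
  by_contra! hlt
  have hN : #(H ∪ ⋃ x : H, Y ∩ G.neighborSet x.1 : Set α) < κ :=
    mk_union_lt hκ.aleph0_le hlt
      (mk_iUnion_lt hκ.aleph0_le (by rwa [hκ.cof_ord]) fun x => hdeg x (hH.prop.1 x.2))
  obtain ⟨y, hyY, hy⟩ : ∃ y ∈ Y, y ∉ H ∪ ⋃ x : H, Y ∩ G.neighborSet x.1 := by
    by_contra! hsub
    exact (hY.trans (mk_le_mk_of_subset hsub)).not_gt hN
  simp only [mem_union, mem_iUnion, not_or, not_exists] at hy
  have hno : ∀ x ∈ H, ¬ G.Adj x y := fun x hx hxy => hy.2 ⟨x, hx⟩ ⟨hyY, hxy⟩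
  have hins : insert y H ∈ {H : Set α | H ⊆ Y ∧ G.IsIndepSet H} :=
    ⟨insert_subset hyY hH.prop.1, pairwise_insert.2
      ⟨hH.prop.2, fun x hx _ => ⟨fun h => hno x hx h.symm, hno x hx⟩⟩⟩
  exact hy.1 (hH.le_of_ge hins (subset_insert y H) (mem_insert y H))

/-- The building block of the singular case: an independent set of size at least a prescribed
`μ < κ` which, together with all its neighbors in `Y`, still has size less than `κ`. -/
lemma exists_indep_block (hκ : κ.IsSingular) (hG : ∀ s, G.IsClique s → s.Finite)
    {Y : Set α} (hdeg : ∀ x ∈ Y, #(Y ∩ G.neighborSet x : Set α) < κ) {Z : Set α} (hZY : Z ⊆ Y)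
    (hZ : κ ≤ #Z) {μ : Cardinal.{u}} (hμ : μ < κ) :
    ∃ H ⊆ Z, μ ≤ #H ∧ G.IsIndepSet H ∧
      #(H ∪ ⋃ x : H, Y ∩ G.neighborSet x.1 : Set α) < κ := by
  obtain ⟨f, hfκ, hf⟩ := exists_cofinal_family κ
  -- A regular cardinal strictly between the cofinality of `κ` and `κ`, so that pigeonhole applies.
  set ν : Cardinal.{u} := Order.succ (max μ κ.ord.cof) with hν
  have hcof : ℵ₀ ≤ κ.ord.cof := Ordinal.aleph0_le_cof_iff.2 <|
    Ordinal.one_lt_cof_iff.2 (isSuccLimit_ord hκ.aleph0_le)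
  have hνreg : ν.IsRegular := isRegular_succ (hcof.trans (le_max_right _ _))
  have hνκ : ν < κ := hκ.isSuccLimit.succ_lt (max_lt hμ hκ.cof_ord_lt)
  obtain ⟨H, hHZ, hνH, hH⟩ := exists_indep_of_isRegular hνreg hG (hνκ.le.trans hZ)
  have hex : ∀ x : H, ∃ i, #(Y ∩ G.neighborSet x.1 : Set α) ≤ f i :=
    fun x => hf _ (hdeg x (hZY (hHZ x.2)))
  choose g hg using hex
  obtain ⟨i, t, htH, hνt, ht⟩ := infinite_pigeonhole_set g ν hνH hνreg.aleph0_le (by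
    rw [hνreg.cof_ord, mk_ord_toType]
    exact (le_max_right _ _).trans_lt (Order.lt_succ _))
  obtain ⟨K, hKt, hK⟩ := le_mk_iff_exists_subset.1 hνt
  refine ⟨K, (hKt.trans htH).trans hHZ, ?_, hH.mono (hKt.trans htH), ?_⟩
  · rw [hK]
    exact (le_max_left _ _).trans (Order.le_succ _)
  · refine mk_union_lt hκ.aleph0_le (hK.trans_lt hνκ) ?_
    refine (mk_iUnion_le _).trans_lt (mul_lt_of_lt hκ.aleph0_le (hK.trans_lt hνκ) ?_)
    refine lt_of_le_of_lt (ciSup_le' fun x => ?_) (hfκ i)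
    have := hg ⟨x.1, htH (hKt x.2)⟩
    rwa [ht (hKt x.2)] at this

lemma exists_indep_of_isSingular (hκ : κ.IsSingular) (hG : ∀ s, G.IsClique s → s.Finite)
    {X : Set α} (hX : κ ≤ #X) : ∃ H ⊆ X, κ ≤ #H ∧ G.IsIndepSet H := by
  obtain ⟨Y, hYX, hY, hdeg⟩ := exists_small_degrees hG hX
  obtain ⟨f, hfκ, hf⟩ := exists_cofinal_family κ
  let N : Set α → Set α := fun H => H ∪ ⋃ x : H, Y ∩ G.neighborSet x.1
  have step : ∀ (B : Set α) (i : κ.ord.cof.ord.ToType), ∃ H : Set α, #B < κ →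
      H ⊆ Y \ B ∧ f i ≤ #H ∧ G.IsIndepSet H ∧ #(N H) < κ := fun B i => by
    by_cases hB : #B < κ
    · have hd : κ ≤ #(Y \ B : Set α) := by
        by_contra! hlt
        refine (hY.trans (mk_le_mk_of_subset ?_)).not_gt (mk_union_lt hκ.aleph0_le hlt hB)
        rw [sdiff_union_self]
        exact subset_union_left
      obtain ⟨H, h⟩ := exists_indep_block hκ hG hdeg sdiff_subset hd (hfκ i)
      exact ⟨H, fun _ => h⟩
    · exact ⟨∅, fun h => absurd h hB⟩
  choose F hF using step
  let H : κ.ord.cof.ord.ToType → Set α := wellFounded_lt.fix fun i rec =>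
    F (⋃ j : Iio i, N (rec j.1 j.2)) i
  have hH : ∀ i, H i = F (⋃ j : Iio i, N (H j.1)) i := fun i => wellFounded_lt.fix_eq _ i
  have hB : ∀ i, (∀ j < i, #(N (H j)) < κ) → #(⋃ j : Iio i, N (H j.1)) < κ := fun i hi =>
    mk_iUnion_lt hκ.aleph0_le (by simpa using mk_Iio_lt i) fun j => hi j.1 j.2
  have hN : ∀ i, #(N (H i)) < κ := fun i => by
    induction i using WellFoundedLT.induction with
    | _ i ih =>
      rw [hH]
      exact (hF _ i (hB i ih)).2.2.2
  have hP : ∀ i, H i ⊆ Y \ (⋃ j : Iio i, N (H j.1)) ∧ f i ≤ #(H i) ∧ G.IsIndepSet (H i) :=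
    fun i => by
      have := hF _ i (hB i fun j _ => hN j)
      rw [← hH] at this
      exact ⟨this.1, this.2.1, this.2.2.1⟩
  have hcross : ∀ i j, i < j → ∀ x ∈ H i, ∀ y ∈ H j, ¬ G.Adj x y := fun i j hij x hx y hy hxy =>
    ((hP j).1 hy).2 (mem_iUnion.2 ⟨⟨i, hij⟩, Or.inr (mem_iUnion.2
      ⟨⟨x, hx⟩, ((hP j).1 hy).1, hxy⟩)⟩)
  refine ⟨⋃ i, H i, iUnion_subset fun i => ((hP i).1.trans sdiff_subset).trans hYX, ?_, ?_⟩
  · by_contra! hlt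
    -- If the union had size less than the limit cardinal `κ`, some block would be larger still.
    obtain ⟨i, hi⟩ := hf _ (hκ.isSuccLimit.succ_lt hlt)
    exact ((Order.succ_le_iff.1 hi).trans_le (hP i).2.1).not_ge
      (mk_le_mk_of_subset (subset_iUnion H i))
  · intro x hx y hy hxy
    obtain ⟨i, hi⟩ := mem_iUnion.1 hx
    obtain ⟨j, hj⟩ := mem_iUnion.1 hy
    rcases lt_trichotomy i j with hij | rfl | hij
    · exact hcross i j hij x hi y hj
    · exact (hP i).2.2 hi hj hxy
    · exact fun h => hcross j i hij y hj x hi h.symm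

end ErdosDushnikMiller

/-- **Erdős–Dushnik–Miller theorem**: for every uncountable cardinal `κ`,
the partition relation `κ → (κ, ω)²` holds: for every 2-coloring of the
unordered pairs of a set of cardinality `κ`, either there is a subset of
cardinality `κ` all of whose pairs get color `0`, or a countably infinite
subset all of whose pairs get color `1`. -/
theorem erdos_dushnik_miller {α : Type u} {κ : Cardinal.{u}}
    (hκ : Cardinal.aleph0 < κ) (hα : Cardinal.mk α = κ)
    (c : Sym2 α → Fin 2) :
    (∃ H : Set α, Cardinal.mk H = κ ∧
      ∀ x ∈ H, ∀ y ∈ H, x ≠ y → c s(x, y) = 0) ∨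
    (∃ H : Set α, Cardinal.mk H = Cardinal.aleph0 ∧
      ∀ x ∈ H, ∀ y ∈ H, x ≠ y → c s(x, y) = 1) := by
  let G : SimpleGraph α :=
    { Adj := fun x y => x ≠ y ∧ c s(x, y) = 1
      symm := ⟨fun x y h => ⟨h.1.symm, by rw [Sym2.eq_swap]; exact h.2⟩⟩
      loopless := ⟨fun x h => h.1 rfl⟩ }
  by_cases hG : ∀ s, G.IsClique s → s.Finite
  · left
    have hX : κ ≤ #(univ : Set α) := by rw [mk_univ, hα]
    obtain ⟨H, -, hH, hind⟩ : ∃ H ⊆ (univ : Set α), κ ≤ #H ∧ G.IsIndepSet H :=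
      (isRegular_or_isSingular hκ.le).elim
        (fun h => ErdosDushnikMiller.exists_indep_of_isRegular h hG hX)
        (fun h => ErdosDushnikMiller.exists_indep_of_isSingular h hG hX)
    refine ⟨H, le_antisymm (hα ▸ mk_set_le H) hH, fun x hx y hy hxy => ?_⟩
    have h1 : c s(x, y) ≠ 1 := fun h => hind hx hy hxy ⟨hxy, h⟩
    lia
  · right
    push Not at hG
    obtain ⟨s, hs, hinf⟩ := hG
    obtain ⟨H, hHs, hH⟩ := le_mk_iff_exists_subset.1
      (aleph0_le_mk_iff.2 (infinite_coe_iff.2 hinf))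
    exact ⟨H, hH, fun x hx y hy hxy => (hs (hHs hx) (hHs hy) hxy).2⟩
end

section
/- The set of binary sequences ℕ → {0,1} can be well-ordered (i.e., there is an injection from ℕ → {0,1} into some ordinal) if and only if there exist an ordinal α and a function f from the ordinals below α to {0,1} such that for every a : ℕ → {0,1} there exists an ordinal β with β + n < α and f(β + n) = a(n) for all n ∈ ℕ. -/
/-!
Both directions are explicit constructions that do not well-order the sequences by choice.
Given an injection `g` into `o`, the sequence `a` is written into the block
`[ω * g a, ω * g a + ω)` of `ω * o`; blocks of distinct sequences are disjoint because
division with remainder by `ω` is unique (`omega0_mul_add_natCast_inj`).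
Conversely, sending `a` to the least `β` at which it occurs as a block of `f` is injective,
since the block at `β` determines `a`.
-/

theorem omega0_mul_add_natCast_inj {x y : Ordinal.{0}} {n m : ℕ}
    (h : Ordinal.omega0 * x + (n : Ordinal.{0}) = Ordinal.omega0 * y + m) :
    x = y ∧ n = m := by
  have hdiv (z : Ordinal.{0}) (k : ℕ) :
      (Ordinal.omega0 * z + (k : Ordinal.{0})) / Ordinal.omega0 = z := by
    rw [Ordinal.mul_add_div _ Ordinal.omega0_ne_zero,
      Ordinal.div_eq_zero_of_lt (Ordinal.natCast_lt_omega0 k), add_zero]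
  have hxy : x = y := by rw [← hdiv x n, h, hdiv]
  subst hxy
  exact ⟨rfl, by simpa using h⟩


/-- The set of binary sequences `ℕ → {0,1}` can be well-ordered (i.e. there is
an injection of it into some ordinal) if and only if there exist an ordinal `α`
and a function `f` from the ordinals below `α` to `{0,1}` such that every
binary sequence `a` occurs as a "block" of `f`: there is `β` with `β + n < α`
and `f (β + n) = a n` for all `n`. -/
theorem wellOrder_reals_iff_block_function :
    (∃ (o : Ordinal.{0}) (g : (ℕ → Fin 2) → Ordinal.{0}),
      Function.Injective g ∧ ∀ a, g a < o) ↔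
    (∃ (α : Ordinal.{0}) (f : {β : Ordinal.{0} // β < α} → Fin 2),
      ∀ a : ℕ → Fin 2, ∃ β : Ordinal.{0},
        ∃ hβ : ∀ n : ℕ, β + (n : Ordinal.{0}) < α,
          ∀ n : ℕ, f ⟨β + (n : Ordinal.{0}), hβ n⟩ = a n) := by
  constructor
  · rintro ⟨o, g, hg, hlt⟩
    classical
    let f : {β : Ordinal.{0} // β < Ordinal.omega0 * o} → Fin 2 := fun γ =>
      if ∃ (a : ℕ → Fin 2) (n : ℕ), γ.1 = Ordinal.omega0 * g a + n ∧ a n = 1 then 1 else 0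
    refine ⟨Ordinal.omega0 * o, f, fun a => ⟨Ordinal.omega0 * g a, fun n => ?_, fun n => ?_⟩⟩
    · calc Ordinal.omega0 * g a + (n : Ordinal.{0})
          < Ordinal.omega0 * g a + Ordinal.omega0 := by
            gcongr
            exact Ordinal.natCast_lt_omega0 n
        _ = Ordinal.omega0 * Order.succ (g a) := (Ordinal.mul_succ _ _).symm
        _ ≤ Ordinal.omega0 * o := by
            gcongr
            exact Order.succ_le_of_lt (hlt a)
    · have key : (∃ (b : ℕ → Fin 2) (m : ℕ), Ordinal.omega0 * g a + (n : Ordinal.{0})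
          = Ordinal.omega0 * g b + m ∧ b m = 1) ↔ a n = 1 := by
        constructor
        · rintro ⟨b, m, h, hb⟩
          obtain ⟨hab, hnm⟩ := omega0_mul_add_natCast_inj h
          rwa [hg hab, hnm]
        · exact fun h => ⟨a, n, rfl, h⟩
      change (if _ then _ else _) = _
      rw [if_congr key rfl rfl]
      split_ifs with h
      · exact h.symm
      · omega
  · rintro ⟨α, f, hf⟩
    let S (a : ℕ → Fin 2) : Set Ordinal.{0} :=
      {β | ∃ hβ : ∀ n : ℕ, β + (n : Ordinal.{0}) < α,
        ∀ n : ℕ, f ⟨β + (n : Ordinal.{0}), hβ n⟩ = a n}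
    have hS (a : ℕ → Fin 2) : sInf (S a) ∈ S a := csInf_mem (hf a)
    refine ⟨α, fun a => sInf (S a), fun a b hab => ?_, fun a => ?_⟩
    · obtain ⟨_, ha⟩ := hS a
      obtain ⟨_, hb⟩ := hS b
      funext n
      rw [← ha n, ← hb n]
      congr 3
    · obtain ⟨h, -⟩ := hS a
      simpa using h 0
end
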